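/- arXiv:2308.14467 — 2 statements merged into one kernel-verified Lean document; each statement's English description precedes it below -/
import Mathlib

section
/- Let σ, χ, λ be infinite cardinals with σ < χ ≤ λ. Then equal(λ, χ⁺, χ, σ) ≤ equal(λ, χ, χ, σ) ≤ max{2^{<χ}, cov(λ, χ, χ⁺, σ)}. Moreover, if cf(χ) < σ then equal(λ, χ⁺, χ, σ) = equal(λ, χ, χ, σ). -/
/-!
Given infinite `σ < χ ≤ λ`, an equal-family for `χ` is also one for `χ⁺`, which gives the first
inequality. For the second, starting from a covering family `X`, the subsets of members of `X` form
an equal-family (if `b ⊆ ⋃₀ Q`, then `b` is the union of the sets `b ∩ x` with `x ∈ Q`), of size at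
most `|X| * 2^{<χ}`.

For the equality when `cf χ < σ`, every set of size at most `χ` is a union of at most `cf χ` sets of
size less than `χ` (`exists_small_pieces`). Cutting the members of an equal-family `Z` for `χ⁺` into
such pieces yields an equal-family for `χ` of size at most `|Z| * cf χ`. This is at most `|Z|`
because any equal-family has size at least `χ` (`le_mk_of_isEqualFamily`): if `⟨x i⟩` enumerates a
set in order type `χ`, the tail `{x j : j ≥ i}` is a union of members of `Z`, one of which, `z i`,
contains `x i`; the least index occurring in `z i` is `i`, so the `z i` are distinct.
-/


open Cardinal Set

universe u

/-- `X ⊆ 𝒫_{ρ₂}(ρ₁)` is a family witnessing the covering number `cov (ρ₁, ρ₂, ρ₃, ρ₄)`: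
every `b ∈ 𝒫_{ρ₃}(ρ₁)` is covered by the union of fewer than `ρ₄` members of `X`. -/
def IsCovFamily (ρ₁ ρ₂ ρ₃ ρ₄ : Cardinal.{u}) (X : Set (Set ρ₁.out)) : Prop :=
  (∀ x ∈ X, #x < ρ₂) ∧
    ∀ b : Set ρ₁.out, #b < ρ₃ →
      ∃ Q : Set (Set ρ₁.out), Q ⊆ X ∧ #Q < ρ₄ ∧ b ⊆ ⋃₀ Q

open scoped Classical in
/-- The covering number `cov (ρ₁, ρ₂, ρ₃, ρ₄)`: the least cardinality of a set
`X ⊆ 𝒫_{ρ₂}(ρ₁)` such that every `b ∈ 𝒫_{ρ₃}(ρ₁)` is included in the union of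
fewer than `ρ₄` members of `X` (with value `2 ^ ρ₁` if no such family exists). -/
noncomputable def cov (ρ₁ ρ₂ ρ₃ ρ₄ : Cardinal.{u}) : Cardinal.{u} :=
  if ∃ X, IsCovFamily ρ₁ ρ₂ ρ₃ ρ₄ X then
    sInf {κ | ∃ X, IsCovFamily ρ₁ ρ₂ ρ₃ ρ₄ X ∧ #X = κ}
  else 2 ^ ρ₁

/-- `χ` is a `λ`-revision cardinal: `cov (λ, χ, χ, σ) ≤ λ` for some cardinal `σ < χ`. -/
def IsRevision (χ lam : Cardinal.{u}) : Prop :=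
  ∃ σ < χ, cov lam χ χ σ ≤ lam

/-- `c` is a limit cardinal: infinite and not the successor of any cardinal. -/
def IsLimitCard (c : Cardinal.{u}) : Prop :=
  ℵ₀ ≤ c ∧ ∀ μ : Cardinal.{u}, c ≠ Order.succ μ

/-- `Z ⊆ 𝒫_τ(λ)` is a family witnessing `equal (λ, τ, ρ, σ)`: every `b ∈ [λ]^ρ` is
the union of fewer than `σ` members of `Z`. -/
def IsEqualFamily (lam tau rho sigma : Cardinal.{u}) (Z : Set (Set lam.out)) : Prop :=
  (∀ z ∈ Z, #z < tau) ∧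
    ∀ b : Set lam.out, #b = rho →
      ∃ e : Set (Set lam.out), e ⊆ Z ∧ #e < sigma ∧ b = ⋃₀ e

open scoped Classical in
/-- `equal (λ, τ, ρ, σ)`: the least cardinality of a set `Z ⊆ 𝒫_τ(λ)` such that every
`b ∈ [λ]^ρ` is the union of fewer than `σ` members of `Z`; `2 ^ λ` if no such `Z` exists. -/
noncomputable def equalCov (lam tau rho sigma : Cardinal.{u}) : Cardinal.{u} :=
  if ∃ Z, IsEqualFamily lam tau rho sigma Z then
    sInf {κ | ∃ Z, IsEqualFamily lam tau rho sigma Z ∧ #Z = κ}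
  else 2 ^ lam

/-- `Z ⊆ 𝒫_τ(λ)` is a family witnessing `equal (λ, τ, <ρ, σ)`: every `b ∈ 𝒫_ρ(λ)` is
the union of fewer than `σ` members of `Z`. -/
def IsEqualLtFamily (lam tau rho sigma : Cardinal.{u}) (Z : Set (Set lam.out)) : Prop :=
  (∀ z ∈ Z, #z < tau) ∧
    ∀ b : Set lam.out, #b < rho →
      ∃ e : Set (Set lam.out), e ⊆ Z ∧ #e < sigma ∧ b = ⋃₀ e

open scoped Classical in
/-- `equal (λ, τ, <ρ, σ)`: the least cardinality of a set `Z ⊆ 𝒫_τ(λ)` such that every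
`b ∈ 𝒫_ρ(λ)` is the union of fewer than `σ` members of `Z`; `2 ^ λ` if no such `Z` exists. -/
noncomputable def equalLtCov (lam tau rho sigma : Cardinal.{u}) : Cardinal.{u} :=
  if ∃ Z, IsEqualLtFamily lam tau rho sigma Z then
    sInf {κ | ∃ Z, IsEqualLtFamily lam tau rho sigma Z ∧ #Z = κ}
  else 2 ^ lam

lemma equalCov_le_mk {lam tau rho sigma : Cardinal.{u}} {Z : Set (Set lam.out)}
    (hZ : IsEqualFamily lam tau rho sigma Z) : equalCov lam tau rho sigma ≤ #Z := by
  rw [equalCov, if_pos ⟨Z, hZ⟩]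
  exact csInf_le' ⟨Z, hZ, rfl⟩

lemma exists_mk_eq_equalCov {lam tau rho sigma : Cardinal.{u}}
    (h : ∃ Z, IsEqualFamily lam tau rho sigma Z) :
    ∃ Z, IsEqualFamily lam tau rho sigma Z ∧ #Z = equalCov lam tau rho sigma := by
  rw [equalCov, if_pos h]
  obtain ⟨Z, hZ⟩ := h
  exact csInf_mem (s := {κ | ∃ Z, IsEqualFamily lam tau rho sigma Z ∧ #Z = κ}) ⟨#Z, Z, hZ, rfl⟩

lemma exists_mk_eq_cov {ρ₁ ρ₂ ρ₃ ρ₄ : Cardinal.{u}} (h : ∃ X, IsCovFamily ρ₁ ρ₂ ρ₃ ρ₄ X) :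
    ∃ X, IsCovFamily ρ₁ ρ₂ ρ₃ ρ₄ X ∧ #X = cov ρ₁ ρ₂ ρ₃ ρ₄ := by
  rw [cov, if_pos h]
  obtain ⟨X, hX⟩ := h
  exact csInf_mem (s := {κ | ∃ X, IsCovFamily ρ₁ ρ₂ ρ₃ ρ₄ X ∧ #X = κ}) ⟨#X, X, hX, rfl⟩

lemma equalCov_le_two_power (lam tau rho sigma : Cardinal.{u}) :
    equalCov lam tau rho sigma ≤ 2 ^ lam := by
  by_cases h : ∃ Z, IsEqualFamily lam tau rho sigma Z
  · obtain ⟨Z, hZ⟩ := h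
    refine (equalCov_le_mk hZ).trans ((mk_set_le Z).trans ?_)
    rw [mk_set, mk_out]
  · rw [equalCov, if_neg h]

lemma equalCov_anti_tau {lam tau tau' rho sigma : Cardinal.{u}} (h : tau ≤ tau') :
    equalCov lam tau' rho sigma ≤ equalCov lam tau rho sigma := by
  by_cases hex : ∃ Z, IsEqualFamily lam tau rho sigma Z
  · obtain ⟨Z, hZ, hc⟩ := exists_mk_eq_equalCov hex
    rw [← hc]
    exact equalCov_le_mk ⟨fun z hz => (hZ.1 z hz).trans_le h, hZ.2⟩
  · rw [equalCov.eq_1 lam tau, if_neg hex]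
    exact equalCov_le_two_power _ _ _ _

lemma le_two_powerlt {χ : Cardinal.{u}} : χ ≤ (2 : Cardinal.{u}) ^< χ := by
  by_contra! h
  exact absurd (le_powerlt 2 h) (not_le.2 (cantor _))

/-- The subsets of the members of a covering family form an equal-family. -/
lemma equalCov_le_max {σ χ lam : Cardinal.{u}} (hχ : ℵ₀ ≤ χ) :
    equalCov lam χ χ σ ≤ max ((2 : Cardinal.{u}) ^< χ) (cov lam χ (Order.succ χ) σ) := by
  by_cases hex : ∃ X, IsCovFamily lam χ (Order.succ χ) σ X
  · obtain ⟨X, hX, hc⟩ := exists_mk_eq_cov hex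
    rw [← hc]
    have hZ : IsEqualFamily lam χ χ σ (⋃ x ∈ X, 𝒫 x) := by
      refine ⟨fun z hz => ?_, fun b hb => ?_⟩
      · simp only [mem_iUnion, mem_powerset_iff] at hz
        obtain ⟨x, hx, hzx⟩ := hz
        exact (mk_le_mk_of_subset hzx).trans_lt (hX.1 x hx)
      · obtain ⟨Q, hQX, hQ, hbQ⟩ := hX.2 b (hb ▸ Order.lt_succ χ)
        refine ⟨(fun x => b ∩ x) '' Q, ?_, mk_image_le.trans_lt hQ, ?_⟩
        · rintro _ ⟨x, hx, rfl⟩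
          simp only [mem_iUnion, mem_powerset_iff]
          exact ⟨x, hQX hx, inter_subset_right⟩
        · ext a
          constructor
          · intro ha
            obtain ⟨x, hx, hax⟩ := hbQ ha
            exact ⟨_, ⟨x, hx, rfl⟩, ha, hax⟩
          · rintro ⟨_, ⟨x, _, rfl⟩, ha, _⟩
            exact ha
    refine (equalCov_le_mk hZ).trans ((mk_biUnion_le _ _).trans ?_)
    have hsup : ⨆ x : X, #(𝒫 x.1) ≤ (2 : Cardinal.{u}) ^< χ :=
      ciSup_le' fun x => by
        rw [mk_powerset]
        exact le_powerlt 2 (hX.1 x.1 x.2)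
    refine (mul_le_mul_right hsup _).trans ?_
    refine (mul_le_max_of_aleph0_le_right (hχ.trans le_two_powerlt)).trans ?_
    rw [max_comm]
  · rw [cov, if_neg hex]
    exact (equalCov_le_two_power _ _ _ _).trans (le_max_right _ _)

/-- A set of size at most `χ` embeds in the initial ordinal of `χ`; the preimages of the initial
segments bounded by a cofinal set cut it into at most `cf χ` smaller pieces. -/
lemma exists_small_pieces {χ : Cardinal.{u}} (hχ : ℵ₀ ≤ χ) {α : Type u} (z : Set α)
    (hz : #z ≤ χ) :
    ∃ P : Set (Set α), (∀ p ∈ P, #p < χ) ∧ #P ≤ χ.ord.cof ∧ ⋃₀ P = z := by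
  rw [← mk_ord_toType χ] at hz
  obtain ⟨g⟩ := hz
  obtain ⟨S, hS, hSc⟩ := Order.exists_cof_eq χ.ord.ToType
  refine ⟨(fun s => Subtype.val '' (g ⁻¹' Iic s)) '' S, ?_, ?_, ?_⟩
  · rintro _ ⟨s, _, rfl⟩
    refine mk_image_le.trans_lt ((mk_preimage_of_injective _ _ g.injective).trans_lt ?_)
    rw [← Iio_insert]
    refine mk_insert_le.trans_lt (add_lt_of_lt hχ (mk_Iio_toType_ord_lt s) ?_)
    exact one_lt_aleph0.trans_le hχ
  · refine mk_image_le.trans ?_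
    rw [hSc, Ordinal.cof_toType]
  · ext a
    constructor
    · rintro ⟨_, ⟨s, _, rfl⟩, ⟨w, _, rfl⟩⟩
      exact w.2
    · intro ha
      obtain ⟨s, hs, hle⟩ := hS (g ⟨a, ha⟩)
      exact ⟨_, ⟨s, hs, rfl⟩, ⟨a, ha⟩, hle, rfl⟩

/-- Members of the family chosen inside the tails of a sequence of length `χ` are distinct. -/
lemma le_mk_of_isEqualFamily {σ χ lam tau : Cardinal.{u}} (hχ : ℵ₀ ≤ χ) (hχlam : χ ≤ lam)
    {Z : Set (Set lam.out)} (hZ : IsEqualFamily lam tau χ σ Z) : χ ≤ #Z := by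
  have hemb : #χ.ord.ToType ≤ #lam.out := by rwa [mk_ord_toType, mk_out]
  obtain ⟨f⟩ := hemb
  have : Infinite χ.ord.ToType := by rwa [infinite_iff, mk_ord_toType]
  have htail : ∀ i : χ.ord.ToType, #(f '' Ici i) = χ := fun i => by
    rw [mk_image_eq f.injective, ← compl_Iio, mk_compl_of_infinite, mk_ord_toType]
    rw [mk_ord_toType]
    exact mk_Iio_toType_ord_lt i
  have hex : ∀ i : χ.ord.ToType, ∃ z : Z, f i ∈ z.1 ∧ z.1 ⊆ f '' Ici i := fun i => by
    obtain ⟨e, heZ, _, heq⟩ := hZ.2 _ (htail i)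
    have hi : f i ∈ ⋃₀ e := heq ▸ mem_image_of_mem f self_mem_Ici
    obtain ⟨z, hz, hiz⟩ := hi
    exact ⟨⟨z, heZ hz⟩, hiz, heq ▸ subset_sUnion_of_mem hz⟩
  choose z hz hzsub using hex
  have key : ∀ i j, z i = z j → j ≤ i := fun i j hij => by
    obtain ⟨k, hk, hki⟩ := hzsub j (hij ▸ hz i)
    exact f.injective hki ▸ hk
  have hinj : Function.Injective z := fun i j hij => le_antisymm (key j i hij.symm) (key i j hij)
  simpa using mk_le_of_injective hinj

lemma equalCov_le_equalCov_succ {σ χ lam : Cardinal.{u}} (hσ : ℵ₀ ≤ σ) (hσχ : σ < χ)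
    (hχlam : χ ≤ lam) (hcof : χ.ord.cof < σ) :
    equalCov lam χ χ σ ≤ equalCov lam (Order.succ χ) χ σ := by
  have hχ : ℵ₀ ≤ χ := hσ.trans hσχ.le
  -- A witnessing family exists: all sets of size at most `χ`, each `b` being `⋃₀ {b}`.
  have hex : ∃ Z, IsEqualFamily lam (Order.succ χ) χ σ Z := by
    refine ⟨{z | #z < Order.succ χ}, fun z hz => hz, fun b hb => ⟨{b}, ?_, ?_, by simp⟩⟩
    · rintro _ rfl
      exact hb.trans_lt (Order.lt_succ χ)
    · rw [mk_singleton]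
      exact one_lt_aleph0.trans_le hσ
  obtain ⟨Z, hZ, hc⟩ := exists_mk_eq_equalCov hex
  have hχZ : χ ≤ #Z := le_mk_of_isEqualFamily hχ hχlam hZ
  rw [← hc]
  have hpieces : ∀ z : Set lam.out, ∃ P : Set (Set lam.out), z ∈ Z →
      (∀ p ∈ P, #p < χ) ∧ #P ≤ χ.ord.cof ∧ ⋃₀ P = z := fun z => by
    by_cases hz : z ∈ Z
    · obtain ⟨P, hP⟩ := exists_small_pieces hχ z (Order.lt_succ_iff.1 (hZ.1 z hz))
      exact ⟨P, fun _ => hP⟩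
    · exact ⟨∅, fun h => absurd h hz⟩
  choose P hP using hpieces
  have hcard : ∀ e ⊆ Z, #(⋃ z ∈ e, P z : Set (Set lam.out)) ≤ #e * χ.ord.cof := fun e he =>
    (mk_biUnion_le _ _).trans
      (mul_le_mul_right (ciSup_le' fun z : e => (hP z.1 (he z.2)).2.1) _)
  have hZ' : IsEqualFamily lam χ χ σ (⋃ z ∈ Z, P z) := by
    refine ⟨fun p hp => ?_, fun b hb => ?_⟩
    · simp only [mem_iUnion] at hp
      obtain ⟨z, hz, hp⟩ := hp
      exact (hP z hz).1 p hp
    · obtain ⟨e, heZ, he, heq⟩ := hZ.2 b hb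
      refine ⟨⋃ z ∈ e, P z, biUnion_subset_biUnion_left heZ,
        (hcard e heZ).trans_lt (mul_lt_of_lt hσ he hcof), ?_⟩
      rw [heq, sUnion_eq_biUnion]
      simp only [sUnion_iUnion]
      exact iUnion₂_congr fun z hz => (hP z (heZ hz)).2.2.symm
  refine (equalCov_le_mk hZ').trans ((hcard Z subset_rfl).trans ?_)
  exact mul_le_of_le (hχ.trans hχZ) le_rfl (hcof.le.trans (hσχ.le.trans hχZ))

/-- Let `σ < χ ≤ λ` be infinite cardinals.  Then
`equal (λ, χ⁺, χ, σ) ≤ equal (λ, χ, χ, σ) ≤ max (2^{<χ}) (cov (λ, χ, χ⁺, σ))`, and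
moreover `equal (λ, χ⁺, χ, σ) = equal (λ, χ, χ, σ)` in case `cf χ < σ`. -/
theorem stmt9 (σ χ lam : Cardinal.{u}) (hσ : ℵ₀ ≤ σ) (hσχ : σ < χ) (hχlam : χ ≤ lam) :
    (equalCov lam (Order.succ χ) χ σ ≤ equalCov lam χ χ σ ∧
      equalCov lam χ χ σ ≤ max ((2 : Cardinal.{u}) ^< χ) (cov lam χ (Order.succ χ) σ)) ∧
    (χ.ord.cof < σ → equalCov lam (Order.succ χ) χ σ = equalCov lam χ χ σ) := by
  have hle : equalCov lam (Order.succ χ) χ σ ≤ equalCov lam χ χ σ :=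
    equalCov_anti_tau (Order.le_succ χ)
  exact ⟨⟨hle, equalCov_le_max (hσ.trans hσχ.le)⟩,
    fun hcof => le_antisymm hle (equalCov_le_equalCov_succ hσ hσχ hχlam hcof)⟩
end

section
/- Let σ, ν, χ, λ be cardinals with σ = cf(σ) ≤ ν < χ ≤ λ and σ infinite. Then cov(λ, ν, ν, σ) = max{π₁, π₂}, where π₁ = cov(λ, χ, ν, σ) and π₂ = sup{cov(τ, ν, ν, σ) : ν ≤ τ < χ, τ a cardinal}. -/
/-!
A family witnessing `cov (λ, ν, ν, σ)` also witnesses `cov (λ, χ, ν, σ)`, and its preimage under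
an injection `τ → λ` witnesses `cov (τ, ν, ν, σ)` (`exists_cover_of_le`); this gives `≥`.

For `≤`, take an optimal family `X` for `cov (λ, χ, ν, σ)` and inside each `x ∈ X` a family `Y x`
of size at most `cov (max |x| ν, ν, ν, σ)` covering the subsets of `x` of size `< ν`
(`exists_cover_subset`). The union of the `Y x` witnesses `cov (λ, ν, ν, σ)`, because a union of
fewer than `σ` families of size `< σ` has size `< σ` by regularity. Its size is at most `π₁ * π₂`,
which is at most `max π₁ π₂` since `π₁` is infinite (`aleph0_le_cov`): finitely many sets of size
`< χ ≤ λ` do not exhaust `λ`.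
-/

open Cardinal Set

universe u

lemma cov_le {ρ₁ ρ₂ ρ₃ ρ₄ : Cardinal.{u}} {X : Set (Set ρ₁.out)}
    (hX : IsCovFamily ρ₁ ρ₂ ρ₃ ρ₄ X) : cov ρ₁ ρ₂ ρ₃ ρ₄ ≤ #X := by
  rw [cov, if_pos ⟨X, hX⟩]
  exact csInf_le' ⟨X, hX, rfl⟩

/-- When `ρ₃ ≤ ρ₂` and `1 < ρ₄`, the family `𝒫_{ρ₃}(ρ₁)` covers, so the infimum in `cov` is
attained. -/
lemma exists_isCovFamily {ρ₁ ρ₂ ρ₃ ρ₄ : Cardinal.{u}} (h : ρ₃ ≤ ρ₂) (h4 : 1 < ρ₄) :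
    ∃ X, IsCovFamily ρ₁ ρ₂ ρ₃ ρ₄ X ∧ #X = cov ρ₁ ρ₂ ρ₃ ρ₄ := by
  have hex : ∃ X, IsCovFamily ρ₁ ρ₂ ρ₃ ρ₄ X := by
    refine ⟨{x | #x < ρ₃}, fun x hx => lt_of_lt_of_le hx h, fun b hb => ⟨{b}, ?_, ?_, ?_⟩⟩
    · simpa using hb
    · simpa using h4
    · simp
  rw [cov, if_pos hex]
  obtain ⟨X, hX⟩ := hex
  exact csInf_mem (s := {κ | ∃ X, IsCovFamily ρ₁ ρ₂ ρ₃ ρ₄ X ∧ #X = κ}) ⟨#X, X, hX, rfl⟩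

/-- A covering family on `τ` pulls back along an injection to any type of size at most `τ`. -/
lemma exists_cover_of_le {ν σ τ : Cardinal.{u}} (hσ : 1 < σ) {α : Type u} (hα : #α ≤ τ) :
    ∃ Y : Set (Set α), #Y ≤ cov τ ν ν σ ∧ (∀ y ∈ Y, #y < ν) ∧
      ∀ b : Set α, #b < ν → ∃ Q ⊆ Y, #Q < σ ∧ b ⊆ ⋃₀ Q := by
  obtain ⟨Z, ⟨hZ1, hZ2⟩, hZc⟩ := exists_isCovFamily (ρ₁ := τ) (le_refl ν) hσ
  rw [← mk_out τ] at hα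
  obtain ⟨f⟩ := hα
  refine ⟨(fun z => f ⁻¹' z) '' Z, hZc ▸ mk_image_le, ?_, fun b hb => ?_⟩
  · rintro _ ⟨z, hz, rfl⟩
    exact (mk_preimage_of_injective f z f.injective).trans_lt (hZ1 z hz)
  · obtain ⟨Q, hQ, hQc, hbQ⟩ := hZ2 (f '' b) (mk_image_le.trans_lt hb)
    refine ⟨(fun z => f ⁻¹' z) '' Q, image_mono hQ, mk_image_le.trans_lt hQc, fun a ha => ?_⟩
    obtain ⟨z, hz, haz⟩ := hbQ (mem_image_of_mem f ha)
    exact ⟨_, mem_image_of_mem _ hz, haz⟩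

/-- The version of `exists_cover_of_le` for a subset `x` of a type, with the covering sets viewed
as subsets of the ambient type. -/
lemma exists_cover_subset {ν σ τ : Cardinal.{u}} (hσ : 1 < σ) {α : Type u} (x : Set α)
    (hx : #x ≤ τ) :
    ∃ Y : Set (Set α), #Y ≤ cov τ ν ν σ ∧ (∀ y ∈ Y, #y < ν) ∧
      ∀ b : Set α, #b < ν → ∃ Q ⊆ Y, #Q < σ ∧ b ∩ x ⊆ ⋃₀ Q := by
  obtain ⟨Y, hYc, hY1, hY2⟩ := exists_cover_of_le (ν := ν) hσ hx
  refine ⟨(fun y => Subtype.val '' y) '' Y, mk_image_le.trans hYc, ?_, fun b hb => ?_⟩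
  · rintro _ ⟨y, hy, rfl⟩
    exact mk_image_le.trans_lt (hY1 y hy)
  · obtain ⟨Q, hQ, hQc, hbQ⟩ := hY2 (Subtype.val ⁻¹' b)
      ((mk_preimage_of_injective _ b Subtype.val_injective).trans_lt hb)
    refine ⟨(fun y => Subtype.val '' y) '' Q, image_mono hQ, mk_image_le.trans_lt hQc, ?_⟩
    rintro a ⟨hab, hax⟩
    obtain ⟨y, hy, hay⟩ := hbQ (show (⟨a, hax⟩ : x) ∈ Subtype.val ⁻¹' b from hab)
    exact ⟨_, mem_image_of_mem _ hy, ⟨_, hay, rfl⟩⟩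

lemma aleph0_le_cov {σ ν χ lam : Cardinal.{u}} (hσ : 1 < σ) (hν : ℵ₀ ≤ ν)
    (hνχ : ν ≤ χ) (hχlam : χ ≤ lam) : ℵ₀ ≤ cov lam χ ν σ := by
  obtain ⟨X, ⟨hX1, hX2⟩, hXc⟩ := exists_isCovFamily (ρ₁ := lam) hνχ hσ
  rw [← hXc]
  by_contra! hlt
  have hfin : X.Finite := lt_aleph0_iff_set_finite.1 hlt
  have hlam : ℵ₀ ≤ lam := hν.trans (hνχ.trans hχlam)
  have key : ∀ S : Set (Set lam.out), S.Finite → S ⊆ X → #(⋃₀ S) < lam := by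
    intro S hS
    induction S, hS using Set.Finite.induction_on with
    | empty => intro _; simpa using aleph0_pos.trans_le hlam
    | insert _ _ ih =>
      intro hsub
      rw [insert_subset_iff] at hsub
      rw [sUnion_insert]
      exact (mk_union_le _ _).trans_lt
        (add_lt_of_lt hlam ((hX1 _ hsub.1).trans_le hχlam) (ih hsub.2))
  -- Covering the singletons forces `⋃₀ X` to be everything.
  have huniv : ⋃₀ X = Set.univ := by
    refine eq_univ_of_forall fun a => ?_
    obtain ⟨Q, hQ, -, haQ⟩ := hX2 {a} (by
      rw [mk_singleton]; exact one_lt_aleph0.trans_le hν)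
    exact sUnion_mono hQ (haQ rfl)
  have := key X hfin le_rfl
  rw [huniv, mk_univ, mk_out] at this
  exact this.false

/-- Let `σ, ν, χ, λ` be cardinals with `σ = cf σ ≤ ν < χ ≤ λ` and `σ`
infinite. Then `cov (λ, ν, ν, σ) = max π₁ π₂`, where `π₁ = cov (λ, χ, ν, σ)` and
`π₂ = sup {cov (τ, ν, ν, σ) : ν ≤ τ < χ}`. -/
theorem stmt16 (σ ν χ lam : Cardinal.{u}) (hσ : ℵ₀ ≤ σ) (hσreg : σ.ord.cof = σ)
    (hσν : σ ≤ ν) (hνχ : ν < χ) (hχlam : χ ≤ lam) :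
    cov lam ν ν σ =
      max (cov lam χ ν σ)
        (sSup {c : Cardinal.{u} | ∃ τ : Cardinal.{u}, ν ≤ τ ∧ τ < χ ∧ c = cov τ ν ν σ}) := by
  have h1 : 1 < σ := one_lt_aleph0.trans_le hσ
  have hreg : σ.IsRegular := ⟨hσ, hσreg.ge⟩
  set S := {c : Cardinal.{u} | ∃ τ : Cardinal.{u}, ν ≤ τ ∧ τ < χ ∧ c = cov τ ν ν σ} with hS
  have hub : ∀ c ∈ S, c ≤ cov lam ν ν σ := by
    rintro c ⟨τ, -, hτχ, rfl⟩
    obtain ⟨Y, hYc, hY1, hY2⟩ := exists_cover_of_le (ν := ν) h1 (α := τ.out) (τ := lam)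
      (by rw [mk_out]; exact hτχ.le.trans hχlam)
    exact (cov_le ⟨hY1, hY2⟩).trans hYc
  refine le_antisymm ?_ (max_le ?_ (csSup_le' hub))
  · obtain ⟨X, ⟨hX1, hX2⟩, hXc⟩ := exists_isCovFamily (ρ₁ := lam) hνχ.le h1
    -- Taking `τ = max |x| ν` handles the members `x` with `|x| < ν` uniformly with the others.
    have hY : ∀ x : X, ∃ Y : Set (Set lam.out), #Y ≤ sSup S ∧ (∀ y ∈ Y, #y < ν) ∧
        ∀ b : Set lam.out, #b < ν → ∃ Q ⊆ Y, #Q < σ ∧ b ∩ x ⊆ ⋃₀ Q := by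
      intro x
      obtain ⟨Y, hYc, hY⟩ := exists_cover_subset (ν := ν) h1 (x : Set lam.out)
        (le_max_left (#(x : Set lam.out)) ν)
      exact ⟨Y, hYc.trans (le_csSup ⟨_, hub⟩
        ⟨_, le_max_right _ _, max_lt (hX1 x x.2) hνχ, rfl⟩), hY⟩
    choose Y hYc hY1 hY2 using hY
    have hfam : IsCovFamily lam ν ν σ (⋃ x, Y x) := by
      refine ⟨fun y hy => ?_, fun b hb => ?_⟩
      · obtain ⟨x, hx⟩ := mem_iUnion.1 hy
        exact hY1 x y hx
      · obtain ⟨Q, hQ, hQc, hbQ⟩ := hX2 b hb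
        choose R hR hRc hbR using fun x => hY2 x b hb
        refine ⟨⋃ q : Q, R ⟨q, hQ q.2⟩, ?_, ?_, ?_⟩
        · exact iUnion_subset fun q => (hR _).trans (subset_iUnion Y _)
        · exact (card_iUnion_lt_iff_forall_of_isRegular hreg hQc).2 fun q => hRc _
        · intro a ha
          obtain ⟨q, hq, haq⟩ := hbQ ha
          obtain ⟨r, hr, har⟩ := hbR ⟨q, hQ hq⟩ ⟨ha, haq⟩
          exact ⟨r, mem_iUnion.2 ⟨⟨q, hq⟩, hr⟩, har⟩
    calc cov lam ν ν σ ≤ #(⋃ x, Y x) := cov_le hfam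
      _ ≤ #X * ⨆ x, #(Y x) := mk_iUnion_le _
      _ ≤ cov lam χ ν σ * sSup S := by
        rw [hXc]
        gcongr
        exact ciSup_le' hYc
      _ ≤ max (cov lam χ ν σ) (sSup S) :=
        mul_le_max_of_aleph0_le_left (aleph0_le_cov h1 (hσ.trans hσν) hνχ.le hχlam)
  · obtain ⟨X, ⟨hX1, hX2⟩, hXc⟩ := exists_isCovFamily (ρ₁ := lam) (le_refl ν) h1
    rw [← hXc]
    exact cov_le ⟨fun x hx => (hX1 x hx).trans hνχ, hX2⟩
end
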